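/- arXiv:1903.12359 — 3 statements merged into one kernel-verified Lean document; each statement's English description precedes it below -/
import Mathlib

section
/- Let R = [a,b] × [c,d] ⊆ ℝ² be a closed rectangle and let φ, ψ : R → ℝ² be continuously differentiable maps that agree on the boundary ∂R of the rectangle. Then the integrals of their Jacobian determinants over R coincide: ∫_R det Dφ = ∫_R det Dψ. (That is, the signed area A(φ) = ∫_R det Dφ depends only on the boundary values of φ.) -/
/-!
Put `w = φ - ψ`, which vanishes on `∂R`, and `g = φ + ψ`. Bilinearity and antisymmetry give
`2 (det Dφ - det Dψ) = det (w_x, g_y) - det (w_y, g_x)`, so it is enough that the right-hand side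
integrates to zero. For `C²` maps it is `∂ₓ det (w, g_y) - ∂_y det (w, g_x)`; for `C¹` maps
`g_y` need not be differentiable in `x`. The remedy is to evaluate the two factors on different
slices: `A(s, t) = ∫ det (w(s, y), g_y(t, y)) dy` equals `-∫ det (w_y(s, y), g(t, y)) dy` because
`w` vanishes at the ends of each slice. The first formula can be differentiated in `s` and the
second one in `t`, so `A(x, x)` is differentiable with derivative
`∫ (det (w_x, g_y) - det (w_y, g_x)) dy`. As `A(x, x)` vanishes at both ends of `[a, b]`, the claim
follows from Fubini's theorem and the fundamental theorem of calculus.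
-/

open MeasureTheory

open Set Filter Topology Function

theorem continuousOn_snd_slice {X Y Z : Type*} [TopologicalSpace X] [TopologicalSpace Y]
    [TopologicalSpace Z] {f : X × Y → Z} {s : Set X} {t : Set Y} {x : X}
    (hf : ContinuousOn f (s ×ˢ t)) (hx : x ∈ s) : ContinuousOn (fun y ↦ f (x, y)) t :=
  hf.uncurry_left (f := fun x y ↦ f (x, y)) x hx

section Parametric

variable {X Y E : Type*} [TopologicalSpace X] [TopologicalSpace Y] [T2Space Y] [MeasurableSpace Y]
  [OpensMeasurableSpace Y] [NormedAddCommGroup E] [NormedSpace ℝ E] {μ : Measure Y}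
  [IsFiniteMeasureOnCompacts μ] {K : Set Y}

theorem continuousOn_setIntegral_of_isCompact (hK : IsCompact K) {s : Set X} {f : X × Y → E}
    (hf : ContinuousOn f (s ×ˢ K)) : ContinuousOn (fun x ↦ ∫ y in K, f (x, y) ∂μ) s := by
  have : IsFiniteMeasureOnCompacts (μ.comap ((↑) : K → Y)) := ⟨fun t ht ↦ by
    rw [(MeasurableEmbedding.subtype_coe hK.measurableSet).comap_apply]
    exact (ht.image continuous_subtype_val).measure_lt_top⟩
  have : CompactSpace K := isCompact_iff_compactSpace.1 hK
  simp only [← integral_subtype_comap hK.measurableSet]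
  refine continuousOn_integral_of_compact_support (k := univ) isCompact_univ ?_ (by simp)
  exact hf.comp (f := fun q : X × K ↦ (q.1, (q.2 : Y))) (by fun_prop) fun q hq ↦ ⟨hq.1, q.2.2⟩

theorem hasDerivAt_setIntegral_of_isCompact {𝕜 : Type*} [RCLike 𝕜] [NormedSpace 𝕜 E]
    (hK : IsCompact K) {s : Set 𝕜} {x : 𝕜} (hs : s ∈ 𝓝 x) {f f' : 𝕜 × Y → E}
    (hf : ContinuousOn f (s ×ˢ K)) (hf' : ContinuousOn f' (s ×ˢ K))
    (hderiv : ∀ z ∈ s, ∀ y ∈ K, HasDerivAt (fun z ↦ f (z, y)) (f' (z, y)) z) :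
    HasDerivAt (fun z ↦ ∫ y in K, f (z, y) ∂μ) (∫ y in K, f' (x, y) ∂μ) x := by
  obtain ⟨t, ht, hts, htK⟩ := LocallyCompactSpace.local_compact_nhds x s hs
  obtain ⟨C, hC⟩ := (htK.prod hK).exists_bound_of_continuousOn
    (hf'.mono (prod_mono_left hts))
  refine (hasDerivAt_integral_of_dominated_loc_of_deriv_le (F := fun z y ↦ f (z, y))
    (F' := fun z y ↦ f' (z, y)) (bound := fun _ ↦ C) ht ?_ ?_ ?_ ?_ ?_ ?_).2
  · filter_upwards [hs] with z hz
    exact (continuousOn_snd_slice hf hz).aestronglyMeasurable_of_isCompact hK hK.measurableSet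
  · exact (continuousOn_snd_slice hf (mem_of_mem_nhds hs)).integrableOn_compact hK
  · exact (continuousOn_snd_slice hf' (mem_of_mem_nhds hs)).aestronglyMeasurable_of_isCompact
      hK hK.measurableSet
  · exact ae_restrict_of_forall_mem hK.measurableSet fun y hy z hz ↦ hC (z, y) ⟨hz, hy⟩
  · exact integrableOn_const hK.measure_ne_top
  · exact ae_restrict_of_forall_mem hK.measurableSet fun y hy z hz ↦ hderiv z (hts hz) y hy

end Parametric

theorem hasDerivAt_diag {𝕜 E : Type*} [RCLike 𝕜] [NormedAddCommGroup E] [NormedSpace 𝕜 E]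
    {F F₁ F₂ : 𝕜 → 𝕜 → E} {x : 𝕜}
    (h₁ : ∀ᶠ p in 𝓝 (x, x), HasDerivAt (fun s ↦ F s p.2) (F₁ p.1 p.2) p.1)
    (h₂ : ∀ᶠ p in 𝓝 (x, x), HasDerivAt (fun t ↦ F p.1 t) (F₂ p.1 p.2) p.2)
    (hF₁ : ContinuousAt (uncurry F₁) (x, x)) (hF₂ : ContinuousAt (uncurry F₂) (x, x)) :
    HasDerivAt (fun t ↦ F t t) (F₁ x x + F₂ x x) x := by
  let T := ContinuousLinearMap.toSpanSingletonCLE (𝕜 := 𝕜) (E := E)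
  have hF : HasStrictFDerivAt (uncurry F) ((T (F₁ x x)).coprod (T (F₂ x x))) (x, x) :=
    hasStrictFDerivAt_uncurry_coprod (f₁ := fun s t ↦ T (F₁ s t)) (f₂ := fun s t ↦ T (F₂ s t))
      h₁ h₂ (T.continuous.continuousAt.comp hF₁) (T.continuous.continuousAt.comp hF₂)
  simpa [T, comp_def] using hF.hasFDerivAt.comp_hasDerivAt (f := fun t ↦ (t, t)) x
    ((hasDerivAt_id x).prodMk (hasDerivAt_id x))

section Partial

variable {𝕜 G E : Type*} [NontriviallyNormedField 𝕜] [NormedAddCommGroup G] [NormedSpace 𝕜 G]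
  [NormedAddCommGroup E] [NormedSpace 𝕜 E] {s : Set 𝕜} {t : Set G} {x : 𝕜} {y : G}

theorem hasDerivWithinAt_fst_slice {f : 𝕜 × G → E} {f' : 𝕜 × G →L[𝕜] E}
    (hf : HasFDerivWithinAt f f' (s ×ˢ t) (x, y)) (hy : y ∈ t) :
    HasDerivWithinAt (fun z ↦ f (z, y)) (f' (1, 0)) s x :=
  hf.comp_hasDerivWithinAt (f := fun z ↦ (z, y)) x
    ((hasDerivWithinAt_id x s).prodMk (hasDerivWithinAt_const x s y)) fun _ hz ↦ ⟨hz, hy⟩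

theorem hasDerivWithinAt_snd_slice {f : G × 𝕜 → E} {f' : G × 𝕜 →L[𝕜] E}
    (hf : HasFDerivWithinAt f f' (t ×ˢ s) (y, x)) (hy : y ∈ t) :
    HasDerivWithinAt (fun z ↦ f (y, z)) (f' (0, 1)) s x :=
  hf.comp_hasDerivWithinAt (f := fun z ↦ (y, z)) x
    ((hasDerivWithinAt_const x s y).prodMk (hasDerivWithinAt_id x s)) fun _ hz ↦ ⟨hy, hz⟩

end Partial

section IntegrationByParts

variable {E F G : Type*} [NormedAddCommGroup E] [NormedSpace ℝ E] [NormedAddCommGroup F]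
  [NormedSpace ℝ F] [NormedAddCommGroup G] [NormedSpace ℝ G] [CompleteSpace G] {a b : ℝ}

theorem setIntegral_Icc_eq_sub_of_hasDerivAt (hab : a ≤ b) {f f' : ℝ → G}
    (hf : ContinuousOn f (Icc a b)) (hderiv : ∀ x ∈ Ioo a b, HasDerivAt f (f' x) x)
    (hf' : ContinuousOn f' (Icc a b)) : ∫ x in Icc a b, f' x = f b - f a := by
  rw [integral_Icc_eq_integral_Ioc, ← intervalIntegral.integral_of_le hab]
  exact intervalIntegral.integral_eq_sub_of_hasDerivAt_of_le hab hf hderiv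
    (hf'.intervalIntegrable_of_Icc hab)

theorem setIntegral_Icc_bilinear_deriv_eq_sub (B : E →L[ℝ] F →L[ℝ] G) (hab : a ≤ b)
    {u u' : ℝ → E} {v v' : ℝ → F}
    (hu : ∀ x ∈ Icc a b, HasDerivWithinAt u (u' x) (Icc a b) x)
    (hv : ∀ x ∈ Icc a b, HasDerivWithinAt v (v' x) (Icc a b) x)
    (hu' : ContinuousOn u' (Icc a b)) (hv' : ContinuousOn v' (Icc a b)) :
    ∫ x in Icc a b, B (u x) (v' x) =
      B (u b) (v b) - B (u a) (v a) - ∫ x in Icc a b, B (u' x) (v x) := by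
  have hu₀ : ContinuousOn u (Icc a b) := fun x hx ↦ (hu x hx).continuousWithinAt
  have hv₀ : ContinuousOn v (Icc a b) := fun x hx ↦ (hv x hx).continuousWithinAt
  have huv' : ContinuousOn (fun x ↦ B (u x) (v' x)) (Icc a b) := by fun_prop
  have hu'v : ContinuousOn (fun x ↦ B (u' x) (v x)) (Icc a b) := by fun_prop
  have product_rule (x) (hx : x ∈ Icc a b) :=
    B.hasDerivWithinAt_of_bilinear (hu x hx) (hv x hx)
  rw [eq_sub_iff_add_eq, ← integral_add huv'.integrableOn_Icc hu'v.integrableOn_Icc]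
  exact setIntegral_Icc_eq_sub_of_hasDerivAt hab
    (fun x hx ↦ (product_rule x hx).continuousWithinAt)
    (fun x hx ↦ (product_rule x (Ioo_subset_Icc_self hx)).hasDerivAt (Icc_mem_nhds hx.1 hx.2))
    (huv'.add hu'v)

end IntegrationByParts

section Pairing

variable {X X' Y E F G : Type*} [NormedAddCommGroup E] [NormedSpace ℝ E] [NormedAddCommGroup F]
  [NormedSpace ℝ F] [NormedAddCommGroup G] [NormedSpace ℝ G] [MeasurableSpace Y]

/-- The integral over `K` of `B` applied to the slices `u (s, ·)` and `v (t, ·)`. The slices have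
independent parameters, possibly of different types, so that each factor can be differentiated
along its own parameter. -/
noncomputable def slicePairing (B : E →L[ℝ] F →L[ℝ] G) (μ : Measure Y) (K : Set Y) (u : X × Y → E)
    (v : X' × Y → F) (s : X) (t : X') : G :=
  ∫ y in K, B (u (s, y)) (v (t, y)) ∂μ

variable [TopologicalSpace Y] [T2Space Y] [OpensMeasurableSpace Y]
  {B : E →L[ℝ] F →L[ℝ] G} {μ : Measure Y} [IsFiniteMeasureOnCompacts μ] {K : Set Y}

theorem continuousOn_slicePairing [TopologicalSpace X] [TopologicalSpace X'] (hK : IsCompact K)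
    {U : Set X} {V : Set X'} {u : X × Y → E} {v : X' × Y → F} (hu : ContinuousOn u (U ×ˢ K))
    (hv : ContinuousOn v (V ×ˢ K)) :
    ContinuousOn (uncurry (slicePairing B μ K u v)) (U ×ˢ V) := by
  have hu₂ : ContinuousOn (fun q : (X × X') × Y ↦ u (q.1.1, q.2)) ((U ×ˢ V) ×ˢ K) :=
    hu.comp (by fun_prop) fun _ hq ↦ ⟨hq.1.1, hq.2⟩
  have hv₂ : ContinuousOn (fun q : (X × X') × Y ↦ v (q.1.2, q.2)) ((U ×ˢ V) ×ˢ K) :=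
    hv.comp (by fun_prop) fun _ hq ↦ ⟨hq.1.2, hq.2⟩
  exact continuousOn_setIntegral_of_isCompact hK
    (f := fun q : (X × X') × Y ↦ B (u (q.1.1, q.2)) (v (q.1.2, q.2)))
    ((B.continuous.comp_continuousOn hu₂).clm_apply hv₂)

theorem hasDerivAt_slicePairing_left (hK : IsCompact K) {U : Set ℝ} {s : ℝ} (hU : U ∈ 𝓝 s)
    {u u' : ℝ × Y → E} {v : X' × Y → F} {t : X'} (hu : ContinuousOn u (U ×ˢ K))
    (hu' : ContinuousOn u' (U ×ˢ K)) (hv : ContinuousOn (fun y ↦ v (t, y)) K)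
    (hderiv : ∀ z ∈ U, ∀ y ∈ K, HasDerivAt (fun z ↦ u (z, y)) (u' (z, y)) z) :
    HasDerivAt (fun z ↦ slicePairing B μ K u v z t) (slicePairing B μ K u' v s t) s := by
  have hv₂ : ContinuousOn (fun p : ℝ × Y ↦ v (t, p.2)) (U ×ˢ K) :=
    hv.comp continuousOn_snd fun _ hp ↦ hp.2
  exact hasDerivAt_setIntegral_of_isCompact hK hU (f := fun p ↦ B (u p) (v (t, p.2)))
    (f' := fun p ↦ B (u' p) (v (t, p.2)))
    ((B.continuous.comp_continuousOn hu).clm_apply hv₂)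
    ((B.continuous.comp_continuousOn hu').clm_apply hv₂)
    fun z hz y hy ↦ (B.flip (v (t, y))).hasFDerivAt.comp_hasDerivAt z (hderiv z hz y hy)

theorem hasDerivAt_slicePairing_right (hK : IsCompact K) {V : Set ℝ} {t : ℝ} (hV : V ∈ 𝓝 t)
    {u : X × Y → E} {v v' : ℝ × Y → F} {s : X} (hu : ContinuousOn (fun y ↦ u (s, y)) K)
    (hv : ContinuousOn v (V ×ˢ K)) (hv' : ContinuousOn v' (V ×ˢ K))
    (hderiv : ∀ z ∈ V, ∀ y ∈ K, HasDerivAt (fun z ↦ v (z, y)) (v' (z, y)) z) :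
    HasDerivAt (slicePairing B μ K u v s) (slicePairing B μ K u v' s t) t :=
  hasDerivAt_slicePairing_left (B := B.flip) hK hV hv hv' hu hderiv

theorem slicePairing_eq_neg_of_eq_zero [CompleteSpace G] {c d : ℝ} (hcd : c ≤ d)
    {u u' : X × ℝ → E} {v v' : X' × ℝ → F} {s : X} {t : X'}
    (hu : ∀ y ∈ Icc c d, HasDerivWithinAt (fun y ↦ u (s, y)) (u' (s, y)) (Icc c d) y)
    (hv : ∀ y ∈ Icc c d, HasDerivWithinAt (fun y ↦ v (t, y)) (v' (t, y)) (Icc c d) y)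
    (hu' : ContinuousOn (fun y ↦ u' (s, y)) (Icc c d))
    (hv' : ContinuousOn (fun y ↦ v' (t, y)) (Icc c d)) (hc : u (s, c) = 0) (hd : u (s, d) = 0) :
    slicePairing B volume (Icc c d) u v' s t = -slicePairing B volume (Icc c d) u' v s t := by
  simpa [slicePairing, hc, hd] using setIntegral_Icc_bilinear_deriv_eq_sub B hcd hu hv hu' hv'

end Pairing

section Wedge

variable {E F G : Type*} [NormedAddCommGroup E] [NormedSpace ℝ E] [NormedAddCommGroup F]
  [NormedSpace ℝ F] [NormedAddCommGroup G] [NormedSpace ℝ G]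

/-- The wedge product `L ∧ M` of two vector-valued one-forms on the plane, with values multiplied by
`B`, evaluated on the standard basis `(1, 0)`, `(0, 1)`. For the derivatives of `w` and `g` it reads
`B(w_x, g_y) - B(w_y, g_x)`. -/
noncomputable def planarWedge (B : E →L[ℝ] F →L[ℝ] G) (L : ℝ × ℝ →L[ℝ] E)
    (M : ℝ × ℝ →L[ℝ] F) : G :=
  B (L (1, 0)) (M (0, 1)) - B (L (0, 1)) (M (1, 0))

variable {B : E →L[ℝ] F →L[ℝ] G}

theorem continuousOn_planarWedge {X : Type*} [TopologicalSpace X] {s : Set X}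
    {L : X → ℝ × ℝ →L[ℝ] E} {M : X → ℝ × ℝ →L[ℝ] F} (hL : ContinuousOn L s)
    (hM : ContinuousOn M s) : ContinuousOn (fun x ↦ planarWedge B (L x) (M x)) s := by
  unfold planarWedge
  fun_prop

theorem integral_planarWedge_slice {X Y : Type*} [TopologicalSpace Y] [T2Space Y]
    [MeasurableSpace Y] [OpensMeasurableSpace Y] {μ : Measure Y} [IsFiniteMeasureOnCompacts μ]
    {K : Set Y} (hK : IsCompact K) {L : X × Y → ℝ × ℝ →L[ℝ] E} {M : X × Y → ℝ × ℝ →L[ℝ] F} {x : X}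
    (hL : ContinuousOn (fun y ↦ L (x, y)) K) (hM : ContinuousOn (fun y ↦ M (x, y)) K) :
    ∫ y in K, planarWedge B (L (x, y)) (M (x, y)) ∂μ =
      slicePairing B μ K (fun p ↦ L p (1, 0)) (fun p ↦ M p (0, 1)) x x -
        slicePairing B μ K (fun p ↦ L p (0, 1)) (fun p ↦ M p (1, 0)) x x := by
  have hLM (u v : ℝ × ℝ) : IntegrableOn (fun y ↦ B (L (x, y) u) (M (x, y) v)) K μ :=
    ((B.continuous.comp_continuousOn (hL.clm_apply continuousOn_const)).clm_apply
      (hM.clm_apply continuousOn_const)).integrableOn_compact hK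
  exact integral_sub (hLM (1, 0) (0, 1)) (hLM (0, 1) (1, 0))

theorem planarWedge_sub_add_of_isAlt {ω : E →L[ℝ] E →L[ℝ] G} (hω : ∀ v, ω v v = 0)
    (L M : ℝ × ℝ →L[ℝ] E) :
    planarWedge ω (L - M) (L + M) =
      (2 : ℝ) • (ω (L (1, 0)) (L (0, 1)) - ω (M (1, 0)) (M (0, 1))) := by
  have swap (u v : E) : ω u v = -ω v u :=
    (LinearMap.IsAlt.neg (B := ω.toLinearMap₁₂) hω v u).symm
  simp only [planarWedge, sub_apply, add_apply, map_sub, map_add, swap (L (0, 1)), swap (M (0, 1)),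
    two_smul]
  abel

variable [CompleteSpace G] {a b c d : ℝ} {w : ℝ × ℝ → E} {g : ℝ × ℝ → F}
  {w' : ℝ × ℝ → ℝ × ℝ →L[ℝ] E} {g' : ℝ × ℝ → ℝ × ℝ →L[ℝ] F}

theorem hasDerivAt_slicePairing_snd_deriv (hcd : c ≤ d)
    (hw : ∀ p ∈ Icc a b ×ˢ Icc c d, HasFDerivWithinAt w (w' p) (Icc a b ×ˢ Icc c d) p)
    (hg : ∀ p ∈ Icc a b ×ˢ Icc c d, HasFDerivWithinAt g (g' p) (Icc a b ×ˢ Icc c d) p)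
    (hw' : ContinuousOn w' (Icc a b ×ˢ Icc c d)) (hg' : ContinuousOn g' (Icc a b ×ˢ Icc c d))
    {s t : ℝ} (hs : s ∈ Icc a b) (ht : t ∈ Ioo a b) (hc : w (s, c) = 0) (hd : w (s, d) = 0) :
    HasDerivAt (slicePairing B volume (Icc c d) w (fun p ↦ g' p (0, 1)) s)
      (-slicePairing B volume (Icc c d) (fun p ↦ w' p (0, 1)) (fun p ↦ g' p (1, 0)) s t) t := by
  have hg₀ : ContinuousOn g (Icc a b ×ˢ Icc c d) := fun p hp ↦ (hg p hp).continuousWithinAt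
  have hwy : ContinuousOn (fun y ↦ w' (s, y) (0, 1)) (Icc c d) :=
    continuousOn_snd_slice (f := fun p ↦ w' p (0, 1)) (by fun_prop) hs
  have hgx : ContinuousOn (fun p ↦ g' p (1, 0)) (Icc a b ×ˢ Icc c d) := by fun_prop
  have hgy : ContinuousOn (fun p ↦ g' p (0, 1)) (Icc a b ×ˢ Icc c d) := by fun_prop
  have hU : Ioo a b ×ˢ Icc c d ⊆ Icc a b ×ˢ Icc c d := prod_mono_left Ioo_subset_Icc_self
  have hderiv : HasDerivAt (slicePairing B volume (Icc c d) (fun p ↦ w' p (0, 1)) g s)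
      (slicePairing B volume (Icc c d) (fun p ↦ w' p (0, 1)) (fun p ↦ g' p (1, 0)) s t) t :=
    hasDerivAt_slicePairing_right isCompact_Icc (Ioo_mem_nhds ht.1 ht.2) hwy (hg₀.mono hU)
      (hgx.mono hU) fun z hz y hy ↦ (hasDerivWithinAt_fst_slice (hg (z, y) (hU ⟨hz, hy⟩))
        hy).hasDerivAt (Icc_mem_nhds hz.1 hz.2)
  refine hderiv.neg.congr_of_eventuallyEq ?_
  filter_upwards [Icc_mem_nhds ht.1 ht.2] with z hz
  exact slicePairing_eq_neg_of_eq_zero (u' := fun p ↦ w' p (0, 1)) hcd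
    (fun y hy ↦ hasDerivWithinAt_snd_slice (hw (s, y) ⟨hs, hy⟩) hs)
    (fun y hy ↦ hasDerivWithinAt_snd_slice (hg (z, y) ⟨hz, hy⟩) hz)
    hwy (continuousOn_snd_slice hgy hz) hc hd

theorem hasDerivAt_slicePairing_diag (hcd : c ≤ d)
    (hw : ∀ p ∈ Icc a b ×ˢ Icc c d, HasFDerivWithinAt w (w' p) (Icc a b ×ˢ Icc c d) p)
    (hg : ∀ p ∈ Icc a b ×ˢ Icc c d, HasFDerivWithinAt g (g' p) (Icc a b ×ˢ Icc c d) p)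
    (hw' : ContinuousOn w' (Icc a b ×ˢ Icc c d)) (hg' : ContinuousOn g' (Icc a b ×ˢ Icc c d))
    (hwc : ∀ x ∈ Icc a b, w (x, c) = 0) (hwd : ∀ x ∈ Icc a b, w (x, d) = 0)
    {x : ℝ} (hx : x ∈ Ioo a b) :
    HasDerivAt (fun x ↦ slicePairing B volume (Icc c d) w (fun p ↦ g' p (0, 1)) x x)
      (∫ y in Icc c d, planarWedge B (w' (x, y)) (g' (x, y))) x := by
  have hU : Ioo a b ×ˢ Icc c d ⊆ Icc a b ×ˢ Icc c d := prod_mono_left Ioo_subset_Icc_self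
  have hw₀ : ContinuousOn w (Icc a b ×ˢ Icc c d) := fun p hp ↦ (hw p hp).continuousWithinAt
  have hw'₀ (v : ℝ × ℝ) : ContinuousOn (fun p ↦ w' p v) (Icc a b ×ˢ Icc c d) := by fun_prop
  have hg'₀ (v : ℝ × ℝ) : ContinuousOn (fun p ↦ g' p v) (Icc a b ×ˢ Icc c d) := by fun_prop
  have nhds_diag : ∀ᶠ p in 𝓝 (x, x), p ∈ Ioo a b ×ˢ Ioo a b :=
    prod_mem_nhds (Ioo_mem_nhds hx.1 hx.2) (Ioo_mem_nhds hx.1 hx.2)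
  have continuousAt_pairing (u v : ℝ × ℝ) : ContinuousAt (uncurry
      (slicePairing B volume (Icc c d) (fun p ↦ w' p u) (fun p ↦ g' p v))) (x, x) :=
    (continuousOn_slicePairing isCompact_Icc ((hw'₀ u).mono hU) ((hg'₀ v).mono hU)).continuousAt
      nhds_diag
  rw [integral_planarWedge_slice isCompact_Icc
    (continuousOn_snd_slice hw' (Ioo_subset_Icc_self hx))
    (continuousOn_snd_slice hg' (Ioo_subset_Icc_self hx)), sub_eq_add_neg]
  refine hasDerivAt_diag (F := slicePairing B volume (Icc c d) w (fun p ↦ g' p (0, 1)))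
    (F₁ := slicePairing B volume (Icc c d) (fun p ↦ w' p (1, 0)) (fun p ↦ g' p (0, 1)))
    (F₂ := -slicePairing B volume (Icc c d) (fun p ↦ w' p (0, 1)) (fun p ↦ g' p (1, 0)))
    ?_ ?_ (continuousAt_pairing _ _) (continuousAt_pairing _ _).neg
  · filter_upwards [nhds_diag] with p hp
    exact hasDerivAt_slicePairing_left isCompact_Icc (Ioo_mem_nhds hp.1.1 hp.1.2) (hw₀.mono hU)
      ((hw'₀ _).mono hU) (continuousOn_snd_slice (hg'₀ _) (Ioo_subset_Icc_self hp.2))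
      fun z hz y hy ↦ (hasDerivWithinAt_fst_slice (hw (z, y) (hU ⟨hz, hy⟩)) hy).hasDerivAt
        (Icc_mem_nhds hz.1 hz.2)
  · filter_upwards [nhds_diag] with p hp
    have hp₁ := Ioo_subset_Icc_self hp.1
    exact hasDerivAt_slicePairing_snd_deriv hcd hw hg hw' hg' hp₁ hp.2 (hwc _ hp₁) (hwd _ hp₁)

theorem integral_planarWedge_eq_zero (hab : a ≤ b) (hcd : c ≤ d)
    (hw : ∀ p ∈ Icc a b ×ˢ Icc c d, HasFDerivWithinAt w (w' p) (Icc a b ×ˢ Icc c d) p)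
    (hg : ∀ p ∈ Icc a b ×ˢ Icc c d, HasFDerivWithinAt g (g' p) (Icc a b ×ˢ Icc c d) p)
    (hw' : ContinuousOn w' (Icc a b ×ˢ Icc c d)) (hg' : ContinuousOn g' (Icc a b ×ˢ Icc c d))
    (hbdy : ∀ p ∈ ({a, b} : Set ℝ) ×ˢ Icc c d ∪ Icc a b ×ˢ ({c, d} : Set ℝ), w p = 0) :
    ∫ p in Icc a b ×ˢ Icc c d, planarWedge B (w' p) (g' p) = 0 := by
  have hw₀ : ContinuousOn w (Icc a b ×ˢ Icc c d) := fun p hp ↦ (hw p hp).continuousWithinAt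
  have hgy : ContinuousOn (fun p ↦ g' p (0, 1)) (Icc a b ×ˢ Icc c d) := by fun_prop
  have hwedge := continuousOn_planarWedge (B := B) hw' hg'
  have side_eq_zero (x) (hx : x ∈ ({a, b} : Set ℝ)) :
      slicePairing B volume (Icc c d) w (fun p ↦ g' p (0, 1)) x x = 0 :=
    setIntegral_eq_zero_of_forall_eq_zero fun y hy ↦ by simp [hbdy (x, y) (.inl ⟨hx, hy⟩)]
  calc ∫ p in Icc a b ×ˢ Icc c d, planarWedge B (w' p) (g' p)
      = ∫ x in Icc a b, ∫ y in Icc c d, planarWedge B (w' (x, y)) (g' (x, y)) :=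
        setIntegral_prod _ (hwedge.integrableOn_compact (isCompact_Icc.prod isCompact_Icc))
    _ = slicePairing B volume (Icc c d) w (fun p ↦ g' p (0, 1)) b b -
          slicePairing B volume (Icc c d) w (fun p ↦ g' p (0, 1)) a a :=
        setIntegral_Icc_eq_sub_of_hasDerivAt hab
          ((continuousOn_slicePairing isCompact_Icc hw₀ hgy).comp (f := fun x ↦ (x, x))
            (by fun_prop) fun _ hx ↦ ⟨hx, hx⟩)
          (fun x hx ↦ hasDerivAt_slicePairing_diag hcd hw hg hw' hg'
            (fun x hx ↦ hbdy _ (.inr ⟨hx, .inl rfl⟩)) (fun x hx ↦ hbdy _ (.inr ⟨hx, .inr rfl⟩)) hx)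
          (continuousOn_setIntegral_of_isCompact isCompact_Icc hwedge)
    _ = 0 := by rw [side_eq_zero a (.inl rfl), side_eq_zero b (.inr rfl), sub_zero]

end Wedge

section Alternating

variable {E F : Type*} [NormedAddCommGroup E] [NormedSpace ℝ E] [NormedAddCommGroup F]
  [NormedSpace ℝ F] [CompleteSpace F] {ω : E →L[ℝ] E →L[ℝ] F} {a b c d : ℝ} {φ ψ : ℝ × ℝ → E}

theorem integral_alternating_eq_of_eqOn_boundary {φ' ψ' : ℝ × ℝ → ℝ × ℝ →L[ℝ] E}
    (hω : ∀ v, ω v v = 0) (hab : a ≤ b) (hcd : c ≤ d)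
    (hφ : ∀ p ∈ Icc a b ×ˢ Icc c d, HasFDerivWithinAt φ (φ' p) (Icc a b ×ˢ Icc c d) p)
    (hψ : ∀ p ∈ Icc a b ×ˢ Icc c d, HasFDerivWithinAt ψ (ψ' p) (Icc a b ×ˢ Icc c d) p)
    (hφ' : ContinuousOn φ' (Icc a b ×ˢ Icc c d)) (hψ' : ContinuousOn ψ' (Icc a b ×ˢ Icc c d))
    (hbdy : ∀ p ∈ ({a, b} : Set ℝ) ×ˢ Icc c d ∪ Icc a b ×ˢ ({c, d} : Set ℝ), φ p = ψ p) :
    ∫ p in Icc a b ×ˢ Icc c d, ω (φ' p (1, 0)) (φ' p (0, 1)) =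
      ∫ p in Icc a b ×ˢ Icc c d, ω (ψ' p (1, 0)) (ψ' p (0, 1)) := by
  have hR : IsCompact (Icc a b ×ˢ Icc c d) := isCompact_Icc.prod isCompact_Icc
  have integrableOn {L : ℝ × ℝ → ℝ × ℝ →L[ℝ] E} (hL : ContinuousOn L (Icc a b ×ˢ Icc c d)) :
      IntegrableOn (fun p ↦ ω (L p (1, 0)) (L p (0, 1))) (Icc a b ×ˢ Icc c d) :=
    ContinuousOn.integrableOn_compact hR (by fun_prop)
  have h := integral_planarWedge_eq_zero (B := ω) hab hcd
    (fun p hp ↦ (hφ p hp).sub (hψ p hp)) (fun p hp ↦ (hφ p hp).add (hψ p hp))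
    (hφ'.sub hψ') (hφ'.add hψ') (fun p hp ↦ sub_eq_zero.2 (hbdy p hp))
  simp only [planarWedge_sub_add_of_isAlt hω, integral_smul, smul_eq_zero, two_ne_zero,
    false_or] at h
  rwa [integral_sub (integrableOn hφ') (integrableOn hψ'), sub_eq_zero] at h

theorem integral_jacobian_eq_of_eqOn_boundary_general (hω : ∀ v, ω v v = 0)
    {R : Set (ℝ × ℝ)} (hR : R = Icc a b ×ˢ Icc c d)
    (hφ : ContDiffOn ℝ 1 φ R) (hψ : ContDiffOn ℝ 1 ψ R)
    (hbdy : ∀ p ∈ ({a, b} : Set ℝ) ×ˢ Icc c d ∪ Icc a b ×ˢ ({c, d} : Set ℝ), φ p = ψ p) :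
    ∫ p in R, ω (fderivWithin ℝ φ R p (1, 0)) (fderivWithin ℝ φ R p (0, 1)) =
      ∫ p in R, ω (fderivWithin ℝ ψ R p (1, 0)) (fderivWithin ℝ ψ R p (0, 1)) := by
  subst hR
  by_cases hdeg : b ≤ a ∨ d ≤ c
  · have hnull : volume (Icc a b ×ˢ Icc c d) = 0 := by
      rw [Measure.volume_eq_prod, Measure.prod_prod]
      rcases hdeg with h | h <;> simp [h]
    simp only [setIntegral_measure_zero _ hnull]
  obtain ⟨hab, hcd⟩ : a < b ∧ c < d := by simpa using hdeg
  have huniq : UniqueDiffOn ℝ (Icc a b ×ˢ Icc c d) :=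
    (uniqueDiffOn_Icc hab).prod (uniqueDiffOn_Icc hcd)
  exact integral_alternating_eq_of_eqOn_boundary hω hab.le hcd.le
    (fun p hp ↦ (hφ.differentiableOn one_ne_zero p hp).hasFDerivWithinAt)
    (fun p hp ↦ (hψ.differentiableOn one_ne_zero p hp).hasFDerivWithinAt)
    (hφ.continuousOn_fderivWithin huniq le_rfl) (hψ.continuousOn_fderivWithin huniq le_rfl) hbdy

end Alternating

/-- The standard area form `dx ∧ dy` of the plane, as a continuous bilinear map. Jacobian
determinants are obtained by evaluating it on the two partial derivatives. -/
noncomputable def planeArea : ℝ × ℝ →L[ℝ] ℝ × ℝ →L[ℝ] ℝ :=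
  (ContinuousLinearMap.mul ℝ ℝ).bilinearComp (.fst ℝ ℝ ℝ) (.snd ℝ ℝ ℝ) -
    (ContinuousLinearMap.mul ℝ ℝ).bilinearComp (.snd ℝ ℝ ℝ) (.fst ℝ ℝ ℝ)

theorem planeArea_apply (u v : ℝ × ℝ) : planeArea u v = u.1 * v.2 - u.2 * v.1 := rfl

theorem planeArea_self (v : ℝ × ℝ) : planeArea v v = 0 := by
  rw [planeArea_apply, mul_comm, sub_self]

theorem det_eq_planeArea (L : ℝ × ℝ →L[ℝ] ℝ × ℝ) :
    LinearMap.det L.toLinearMap = planeArea (L (1, 0)) (L (0, 1)) := by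
  rw [← LinearMap.det_toMatrix (Module.Basis.finTwoProd ℝ), Matrix.det_fin_two]
  simp [LinearMap.toMatrix_apply, planeArea_apply, mul_comm]

/-- **The signed area is a null Lagrangian on a rectangle.**
If `φ, ψ : R → ℝ²` are `C¹` maps on the closed rectangle `R = [a,b] × [c,d]`
which agree on the boundary of the rectangle, then the integrals of their
Jacobian determinants over `R` coincide. -/
theorem integral_jacobian_eq_of_eqOn_boundary
    (a b c d : ℝ) (hab : a ≤ b) (hcd : c ≤ d)
    (φ ψ : ℝ × ℝ → ℝ × ℝ)
    (R : Set (ℝ × ℝ)) (hR : R = Set.Icc a b ×ˢ Set.Icc c d)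
    (hφ : ContDiffOn ℝ 1 φ R) (hψ : ContDiffOn ℝ 1 ψ R)
    (hbdy : ∀ p ∈ (({a, b} : Set ℝ) ×ˢ Set.Icc c d) ∪ (Set.Icc a b ×ˢ ({c, d} : Set ℝ)),
      φ p = ψ p) :
    ∫ p in R, LinearMap.det (fderivWithin ℝ φ R p).toLinearMap
      = ∫ p in R, LinearMap.det (fderivWithin ℝ ψ R p).toLinearMap := by
  simp only [det_eq_planeArea]
  exact integral_jacobian_eq_of_eqOn_boundary_general planeArea_self hR hφ hψ hbdy
end

section
/- (Quasisymmetric extension.) There exists a function K : (0,∞) → (0,∞) with the following property: for every k > 0, every function f that is k-quasisymmetric on a closed interval I = [a,b] (with a < b) admits an extension to a function f̃ : ℝ → ℝ that is k̃-quasisymmetric on the entire real axis for some constant k̃ ≤ K(k); in particular f̃(x) = f(x) for all x ∈ [a,b]. -/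
/-!
After an affine change of variable the interval is `[0, 1/2]`. Extend `f` by point reflection of its
graph in `(1/2, f (1/2))`, and then by the rule `g (x + 1) = g x + q`; the resulting `g` is point
symmetric about every multiple of `1/2`.

State quasisymmetry as: `|x - y| ≤ |x - z|` implies `|g x - g y| ≤ k |g x - g z|`. It then survives
one point reflection with constant `(1 + k) ^ 2`, since reflecting points back to the known side
costs a factor at most `3` in distance, that is, two applications of the hypothesis. Reflections in
`0`, `1/2` and `3/2`, combined with translations, reach an interval of length at least `3`, a
translate of which contains any `x, y, z` with `|x - y| ≤ |x - z| ≤ 1`. When `|x - z| = t ≥ 1` the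
translation rule alone gives `|g x - g z| ≥ ⌊t⌋ q` and `|g x - g y| ≤ ⌈t⌉ q ≤ 2 ⌊t⌋ q`.
-/

/-- A continuous, strictly increasing function `f` on an interval `I ⊆ ℝ` is
`k`-quasisymmetric on `I` if
`1/k ≤ (f (x+t) - f x)/(f x - f (x-t)) ≤ k`
for all `x, x - t, x + t ∈ I` with `t > 0`. -/
def QuasisymmetricOn (f : ℝ → ℝ) (k : ℝ) (I : Set ℝ) : Prop :=
  ContinuousOn f I ∧ StrictMonoOn f I ∧
    ∀ x t : ℝ, 0 < t → x ∈ I → x - t ∈ I → x + t ∈ I →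
      1 / k ≤ (f (x + t) - f x) / (f x - f (x - t)) ∧
        (f (x + t) - f x) / (f x - f (x - t)) ≤ k

open Set
open scoped AddConstMap

/-- Weak `k`-quasisymmetry on `s` (Tukia–Väisälä): points at most as far from `x` as `z` is have
images at most `k` times as far from `f x` as `f z` is. Unlike the ratio condition of
`QuasisymmetricOn`, it involves no division and is visibly invariant under isometries. -/
def WeaklyQuasisymmetricOn {X Y : Type*} [PseudoMetricSpace X] [PseudoMetricSpace Y]
    (f : X → Y) (k : ℝ) (s : Set X) : Prop :=
  ∀ ⦃x⦄, x ∈ s → ∀ ⦃y⦄, y ∈ s → ∀ ⦃z⦄, z ∈ s →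
    dist x y ≤ dist x z → dist (f x) (f y) ≤ k * dist (f x) (f z)

lemma dist_eq_sub_of_le {u v : ℝ} (h : u ≤ v) : dist u v = v - u := by
  rw [dist_comm, Real.dist_eq, abs_of_nonneg (sub_nonneg.mpr h)]

lemma mem_uIcc_or_two_mul_sub_mem_uIcc {x y z : ℝ} (h : dist x y ≤ dist x z) :
    y ∈ uIcc x z ∨ 2 * x - y ∈ uIcc x z := by
  simp only [Real.dist_eq, mem_uIcc] at h ⊢
  grind

lemma dist_map_le_of_mem_uIcc {f : ℝ → ℝ} {x y z : ℝ} (hf : MonotoneOn f (uIcc x z))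
    (hy : y ∈ uIcc x z) : dist (f x) (f y) ≤ dist (f x) (f z) :=
  Real.dist_left_le_of_mem_uIcc (hf.image_uIcc_subset (mem_image_of_mem f hy))

lemma WeaklyQuasisymmetricOn.preimage {X X' Y Y' : Type*} [PseudoMetricSpace X]
    [PseudoMetricSpace X'] [PseudoMetricSpace Y] [PseudoMetricSpace Y'] {f : X → Y} {k : ℝ}
    {s : Set X} (hf : WeaklyQuasisymmetricOn f k s) {σ : X' → X} (hσ : Isometry σ) {g : X' → Y'}
    (hg : ∀ x y, dist (g x) (g y) = dist (f (σ x)) (f (σ y))) :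
    WeaklyQuasisymmetricOn g k (σ ⁻¹' s) := by
  intro x hx y hy z hz hxyz
  rw [hg, hg]
  exact hf hx hy hz (by rwa [hσ.dist_eq, hσ.dist_eq])

lemma WeaklyQuasisymmetricOn.congr {X Y : Type*} [PseudoMetricSpace X] [PseudoMetricSpace Y]
    {f g : X → Y} {k : ℝ} {s : Set X} (hf : WeaklyQuasisymmetricOn f k s) (hfg : EqOn f g s) :
    WeaklyQuasisymmetricOn g k s := by
  intro x hx y hy z hz hxyz
  rw [← hfg hx, ← hfg hy, ← hfg hz]
  exact hf hx hy hz hxyz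

lemma ratio_bounds_iff_dist_le {k u v w : ℝ} (hk : 0 < k) (huv : u < v) (hvw : v < w) :
    1 / k ≤ (w - v) / (v - u) ∧ (w - v) / (v - u) ≤ k ↔
      dist v u ≤ k * dist v w ∧ dist v w ≤ k * dist v u := by
  rw [dist_comm v u, dist_eq_sub_of_le huv.le, dist_eq_sub_of_le hvw.le,
    div_le_iff₀ (sub_pos.mpr huv), div_le_div_iff₀ hk (sub_pos.mpr huv), one_mul,
    mul_comm k (w - v)]

namespace QuasisymmetricOn

variable {f : ℝ → ℝ} {k : ℝ} {I : Set ℝ}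

lemma one_le {a b : ℝ} (hab : a < b) (hf : QuasisymmetricOn f k (Icc a b)) : 1 ≤ k := by
  obtain ⟨-, hmono, hratio⟩ := hf
  have ha : a ∈ Icc a b := left_mem_Icc.mpr hab.le
  have hb : b ∈ Icc a b := right_mem_Icc.mpr hab.le
  have hm : (a + b) / 2 ∈ Icc a b := ⟨by linarith, by linarith⟩
  have hleft : f a < f ((a + b) / 2) := hmono ha hm (by linarith)
  have hright : f ((a + b) / 2) < f b := hmono hm hb (by linarith)
  have hadd : (a + b) / 2 + (b - a) / 2 = b := by ring
  have hsub : (a + b) / 2 - (b - a) / 2 = a := by ring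
  have hr := hratio _ _ (half_pos (sub_pos.mpr hab)) hm (hsub.symm ▸ ha) (hadd.symm ▸ hb)
  rw [hadd, hsub] at hr
  have hk : 0 < k := (div_pos (sub_pos.mpr hright) (sub_pos.mpr hleft)).trans_le hr.2
  have := (div_le_iff₀ hk).mp (hr.1.trans hr.2)
  nlinarith

lemma dist_add_le (hf : QuasisymmetricOn f k I) (hk : 0 < k) {x t : ℝ} (hx : x ∈ I)
    (hsub : x - t ∈ I) (hadd : x + t ∈ I) :
    dist (f x) (f (x + t)) ≤ k * dist (f x) (f (x - t)) := by
  have hdist : ∀ {s : ℝ}, 0 < s → x - s ∈ I → x + s ∈ I →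
      dist (f x) (f (x - s)) ≤ k * dist (f x) (f (x + s)) ∧
        dist (f x) (f (x + s)) ≤ k * dist (f x) (f (x - s)) := fun {s} hs hsub hadd ↦
    (ratio_bounds_iff_dist_le hk (hf.2.1 hsub hx (by linarith)) (hf.2.1 hx hadd (by linarith))).mp
      (hf.2.2 x s hs hx hsub hadd)
  rcases lt_trichotomy t 0 with ht | rfl | ht
  · rw [← sub_neg_eq_add] at hadd ⊢
    rw [sub_eq_add_neg] at hsub ⊢
    exact (hdist (neg_pos.mpr ht) hadd hsub).1
  · simp
  · exact (hdist ht hsub hadd).2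

lemma weaklyQuasisymmetricOn (hf : QuasisymmetricOn f k I) (hI : I.OrdConnected) (hk : 1 ≤ k) :
    WeaklyQuasisymmetricOn f k I := by
  intro x hx y hy z hz hxyz
  have hmono : MonotoneOn f (uIcc x z) := hf.2.1.monotoneOn.mono (hI.uIcc_subset hx hz)
  rcases mem_uIcc_or_two_mul_sub_mem_uIcc hxyz with hyz | hyz
  · exact (dist_map_le_of_mem_uIcc hmono hyz).trans (le_mul_of_one_le_left dist_nonneg hk)
  · have hx' : x - (y - x) = 2 * x - y := by ring
    have hsym := hf.dist_add_le (t := y - x) (one_pos.trans_le hk) hx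
      (hx' ▸ hI.uIcc_subset hx hz hyz) (by simpa using hy)
    rw [add_sub_cancel, hx'] at hsym
    exact hsym.trans
      (mul_le_mul_of_nonneg_left (dist_map_le_of_mem_uIcc hmono hyz) (zero_le_one.trans hk))

lemma comp_affine {J : Set ℝ} (hf : QuasisymmetricOn f k I) {p q : ℝ} (hp : 0 < p)
    (hJ : MapsTo (fun x ↦ p * x + q) J I) : QuasisymmetricOn (fun x ↦ f (p * x + q)) k J := by
  obtain ⟨hcont, hmono, hratio⟩ := hf
  refine ⟨hcont.comp (by fun_prop) hJ, hmono.comp (fun x _ y _ hxy ↦ by gcongr) hJ,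
    fun x t ht hx hsub hadd ↦ ?_⟩
  have hadd_eq : p * (x + t) + q = p * x + q + p * t := by ring
  have hsub_eq : p * (x - t) + q = p * x + q - p * t := by ring
  simp only [hadd_eq, hsub_eq]
  exact hratio _ _ (by positivity) (hJ hx) (hsub_eq ▸ hJ hsub) (hadd_eq ▸ hJ hadd)

end QuasisymmetricOn

lemma WeaklyQuasisymmetricOn.quasisymmetricOn {f : ℝ → ℝ} {k : ℝ} {I : Set ℝ}
    (hf : WeaklyQuasisymmetricOn f k I) (hcont : ContinuousOn f I) (hmono : StrictMonoOn f I)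
    (hk : 0 < k) : QuasisymmetricOn f k I := by
  refine ⟨hcont, hmono, fun x t ht hx hsub hadd ↦ ?_⟩
  rw [ratio_bounds_iff_dist_le hk (hmono hsub hx (by linarith)) (hmono hx hadd (by linarith))]
  exact ⟨hf hx hsub hadd (by simp), hf hx hadd hsub (by simp)⟩

/-- The weak quasisymmetry constant obtained for a point symmetric function from a constant `k` on
one side of its centre. -/
def reflectionConst (k : ℝ) : ℝ := (1 + k) ^ 2

lemma one_le_reflectionConst {k : ℝ} (hk : 0 ≤ k) : 1 ≤ reflectionConst k :=
  one_le_pow₀ (by linarith)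

lemma two_le_reflectionConst_iterate {k : ℝ} (hk : 0 ≤ k) : 2 ≤ reflectionConst^[3] k := by
  have h₁ := one_le_reflectionConst hk
  have h₂ := one_le_reflectionConst (zero_le_one.trans h₁)
  change 2 ≤ (1 + reflectionConst (reflectionConst k)) ^ 2
  nlinarith

/-- The graph of `g` is invariant under the point reflection in `(c, g c)`. -/
def PointSymmetricAt (g : ℝ → ℝ) (c : ℝ) : Prop := ∀ x, g (2 * c - x) = 2 * g c - g x

namespace WeaklyQuasisymmetricOn

variable {φ : ℝ → ℝ} {k r : ℝ}

lemma map_le_of_le_three_mul (h : WeaklyQuasisymmetricOn φ k (Icc 0 r)) (h0 : φ 0 = 0)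
    (hmono : Monotone φ) (hk : 0 ≤ k) {m y : ℝ} (hm : m ∈ Icc 0 r) (hy : y ∈ Icc 0 r)
    (hym : y ≤ 3 * m) : φ y ≤ reflectionConst k * φ m := by
  have hφm : 0 ≤ φ m := h0 ▸ hmono hm.1
  rcases le_total y m with hle | hle
  · exact (hmono hle).trans (le_mul_of_one_le_left hφm (one_le_reflectionConst hk))
  · have hr0 : (0 : ℝ) ∈ Icc 0 r := left_mem_Icc.mpr (hm.1.trans hm.2)
    have hp : (m + y) / 2 ∈ Icc 0 r := ⟨by linarith [hm.1, hy.1], by linarith [hm.2, hy.2]⟩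
    have hfirst : dist (φ m) (φ ((m + y) / 2)) ≤ k * φ m := by
      have := h hm hp hr0 (by rw [Real.dist_eq, Real.dist_eq]; grind)
      rwa [h0, dist_zero_right, Real.norm_of_nonneg hφm] at this
    have hsecond : dist (φ ((m + y) / 2)) (φ y) ≤ k * dist (φ m) (φ ((m + y) / 2)) := by
      rw [dist_comm (φ m)]
      exact h hp hy hm (by rw [Real.dist_eq, Real.dist_eq]; grind)
    calc φ y ≤ φ m + dist (φ m) (φ y) := by
          rw [Real.dist_eq]; linarith [neg_le_abs (φ m - φ y)]
      _ ≤ φ m + (k * φ m + k * (k * φ m)) := by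
          grw [dist_triangle _ (φ ((m + y) / 2)), hsecond, hfirst]
      _ ≤ reflectionConst k * φ m := by
          unfold reflectionConst; nlinarith [mul_nonneg hk hφm]

lemma dist_map_le_of_nonneg_of_nonpos (h : WeaklyQuasisymmetricOn φ k (Icc 0 r))
    (hodd : φ.Odd) (hmono : Monotone φ) (hk : 0 ≤ k) {x y z : ℝ} (hx : x ∈ Icc 0 r)
    (hy : y ∈ Icc 0 r) (hz : z ∈ Icc (-r) 0) (hxyz : dist x y ≤ dist x z) :
    dist (φ x) (φ y) ≤ reflectionConst k * dist (φ x) (φ z) := by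
  have hneg : -z ∈ Icc 0 r := ⟨neg_nonneg.mpr hz.2, neg_le.mp hz.1⟩
  have hφx : 0 ≤ φ x := hodd.map_zero ▸ hmono hx.1
  have hφy : 0 ≤ φ y := hodd.map_zero ▸ hmono hy.1
  have hφz : 0 ≤ φ (-z) := hodd.map_zero ▸ hmono hneg.1
  have hdist : dist (φ x) (φ z) = φ x + φ (-z) := by
    rw [dist_comm, dist_eq_sub_of_le (hmono (hz.2.trans hx.1)), hodd, sub_eq_add_neg]
  have hmax : φ (max x (-z)) ≤ φ x + φ (-z) := by
    rw [hmono.map_max]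
    exact max_le_add_of_nonneg hφx hφz
  have hy_le : y ≤ 3 * max x (-z) := by
    have hyx : y - x ≤ x - z := by
      rw [dist_comm x z, dist_eq_sub_of_le (hz.2.trans hx.1), dist_comm] at hxyz
      exact (le_abs_self _).trans hxyz
    linarith [le_max_left x (-z), le_max_right x (-z)]
  have hm : max x (-z) ∈ Icc 0 r := max_rec' (· ∈ Icc 0 r) hx hneg
  have hx_le : x ≤ 3 * max x (-z) := by linarith [le_max_left x (-z), hm.1]
  have hle {u : ℝ} (hu : u ∈ Icc 0 r) (hum : u ≤ 3 * max x (-z)) :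
      φ u ≤ reflectionConst k * φ (max x (-z)) :=
    h.map_le_of_le_three_mul hodd.map_zero hmono hk hm hu hum
  calc dist (φ x) (φ y) ≤ reflectionConst k * φ (max x (-z)) :=
        abs_sub_le_of_nonneg_of_le hφx (hle hx hx_le) hφy (hle hy hy_le)
    _ ≤ reflectionConst k * dist (φ x) (φ z) := by
      rw [hdist]; exact mul_le_mul_of_nonneg_left hmax (sq_nonneg _)

lemma dist_map_le_of_nonpos_of_two_mul_sub_le (h : WeaklyQuasisymmetricOn φ k (Icc 0 r))
    (hodd : φ.Odd) (hmono : Monotone φ) {x y z : ℝ} (hx : x ∈ Icc 0 r)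
    (hy : y ≤ 0) (hz : z ∈ Icc 0 r) (hxyz : 2 * x - y ≤ z) :
    dist (φ x) (φ y) ≤ reflectionConst k * dist (φ x) (φ z) := by
  have hφxz : φ x ≤ φ z := hmono (by linarith [hx.1])
  have hφx : φ x ≤ k * (φ z - φ x) := by
    have hxz : x ≤ z := by linarith [hx.1]
    have := h hx (left_mem_Icc.mpr (hx.1.trans hx.2)) hz <| by
      rw [dist_zero_right, Real.norm_of_nonneg hx.1, dist_eq_sub_of_le hxz]
      linarith
    rwa [hodd.map_zero, dist_zero_right, Real.norm_of_nonneg (hodd.map_zero ▸ hmono hx.1),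
      dist_eq_sub_of_le hφxz] at this
  have hφy : -φ y ≤ φ z := hodd y ▸ hmono (by linarith [hx.1])
  rw [dist_comm (φ x) (φ y), dist_eq_sub_of_le (hmono (hy.trans hx.1)), dist_eq_sub_of_le hφxz]
  unfold reflectionConst
  nlinarith [mul_nonneg (sq_nonneg k) (sub_nonneg.mpr hφxz)]

lemma of_odd (h : WeaklyQuasisymmetricOn φ k (Icc 0 r)) (hodd : φ.Odd) (hmono : Monotone φ)
    (hk : 0 ≤ k) : WeaklyQuasisymmetricOn φ (reflectionConst k) (Icc (-r) r) := by
  have hkC : k ≤ reflectionConst k := by unfold reflectionConst; nlinarith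
  intro x hx y hy z hz hxyz
  wlog hx0 : 0 ≤ x generalizing x y z
  · have hneg {u : ℝ} (hu : u ∈ Icc (-r) r) : -u ∈ Icc (-r) r := by
      rwa [neg_mem_Icc_iff, neg_neg]
    simpa only [hodd _, dist_neg_neg] using
      this (hneg hx) (hneg hy) (hneg hz) (by rwa [dist_neg_neg, dist_neg_neg]) (by linarith)
  have hxS : x ∈ Icc 0 r := ⟨hx0, hx.2⟩
  rcases mem_uIcc_or_two_mul_sub_mem_uIcc hxyz with hyxz | hyxz
  · exact (dist_map_le_of_mem_uIcc (hmono.monotoneOn _) hyxz).trans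
      (le_mul_of_one_le_left dist_nonneg (one_le_reflectionConst hk))
  rcases le_or_gt 0 y with hy0 | hy0
  · rcases le_total 0 z with hz0 | hz0
    · exact (h hxS ⟨hy0, hy.2⟩ ⟨hz0, hz.2⟩ hxyz).trans (by gcongr)
    · exact h.dist_map_le_of_nonneg_of_nonpos hodd hmono hk hxS ⟨hy0, hy.2⟩ ⟨hz.1, hz0⟩ hxyz
  · have hyz : 2 * x - y ≤ z := by
      rcases mem_uIcc.mp hyxz with hle | hle <;> linarith
    exact h.dist_map_le_of_nonpos_of_two_mul_sub_le hodd hmono hxS hy0.le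
      ⟨by linarith, hz.2⟩ hyz

lemma reflect {g : ℝ → ℝ} {c : ℝ} (h : WeaklyQuasisymmetricOn g k (Icc c (c + r)))
    (hc : PointSymmetricAt g c) (hmono : Monotone g) (hk : 0 ≤ k) :
    WeaklyQuasisymmetricOn g (reflectionConst k) (Icc (c - r) (c + r)) := by
  have hodd : Function.Odd fun u ↦ g (u + c) - g c := fun u ↦ by
    have := hc (u + c)
    rw [show 2 * c - (u + c) = -u + c by ring] at this
    linarith
  have hhalf : WeaklyQuasisymmetricOn (fun u ↦ g (u + c) - g c) k (Icc 0 r) := by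
    simpa using h.preimage (g := fun u ↦ g (u + c) - g c) (isometry_add_right c)
      fun x y ↦ dist_sub_right ..
  have hfull := hhalf.of_odd hodd (fun u v huv ↦ sub_le_sub_right (hmono (by gcongr)) _) hk
  simpa [add_comm, sub_eq_add_neg] using
    hfull.preimage (g := g) (isometry_add_right (-c)) fun x y ↦ by simp

end WeaklyQuasisymmetricOn

section AddConstMap

open AddConstMapClass

variable {q : ℝ} {g : ℝ →+c[1, q] ℝ} {k c : ℝ}

lemma PointSymmetricAt.add_half_int (hc : PointSymmetricAt g c) (n : ℤ) :
    PointSymmetricAt g (c + n / 2) := by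
  have hshift (x : ℝ) : g (2 * (c + n / 2) - x) = 2 * g c - g x + n * q := by
    rw [show 2 * (c + n / 2) - x = 2 * c - x + n by ring, map_add_int', hc, zsmul_eq_mul]
  have hcenter := hshift (c + n / 2)
  rw [show 2 * (c + n / 2) - (c + n / 2) = c + (n / 2 : ℝ) by ring] at hcenter
  intro x
  rw [hshift]
  linarith

lemma WeaklyQuasisymmetricOn.translate {s : Set ℝ} (h : WeaklyQuasisymmetricOn g k s)
    (n : ℤ) : WeaklyQuasisymmetricOn g k ((· - (n : ℝ)) ⁻¹' s) :=
  h.preimage (IsometryEquiv.subRight (n : ℝ)).isometry fun x y ↦ by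
    rw [IsometryEquiv.subRight_apply, IsometryEquiv.subRight_apply, map_sub_int', map_sub_int',
      dist_sub_right]

lemma dist_map_le_ceil_dist_mul (hmono : Monotone g) (x y : ℝ) :
    dist (g x) (g y) ≤ ⌈dist x y⌉₊ * q := by
  wlog hxy : x ≤ y generalizing x y
  · simpa only [dist_comm] using this y x (le_of_not_ge hxy)
  rw [dist_eq_sub_of_le (hmono hxy), dist_eq_sub_of_le hxy, sub_le_iff_le_add', ← nsmul_eq_mul,
    ← map_add_nat']
  exact hmono (sub_le_iff_le_add'.mp (Nat.le_ceil _))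

lemma floor_dist_mul_le_dist_map (hmono : Monotone g) (x y : ℝ) :
    ⌊dist x y⌋₊ * q ≤ dist (g x) (g y) := by
  wlog hxy : x ≤ y generalizing x y
  · simpa only [dist_comm] using this y x (le_of_not_ge hxy)
  rw [dist_eq_sub_of_le (hmono hxy), dist_eq_sub_of_le hxy, le_sub_iff_add_le', ← nsmul_eq_mul,
    ← map_add_nat']
  exact hmono (le_sub_iff_add_le'.mp (Nat.floor_le (sub_nonneg.mpr hxy)))

lemma dist_map_le_two_mul_of_one_le_dist (hmono : Monotone g) {x y z : ℝ}
    (hxz : 1 ≤ dist x z) (hxyz : dist x y ≤ dist x z) :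
    dist (g x) (g y) ≤ 2 * dist (g x) (g z) := by
  have hq : 0 ≤ q := by
    have hstep : g (0 + 1) = g 0 + q := map_add_const g 0
    linarith [hmono (zero_le_one' ℝ), zero_add (1 : ℝ) ▸ hstep]
  have hceil : (⌈dist x z⌉₊ : ℝ) ≤ 2 * ⌊dist x z⌋₊ := by
    have := Nat.ceil_le_floor_add_one (dist x z)
    have := Nat.one_le_floor_iff _ |>.mpr hxz
    exact_mod_cast (by lia : ⌈dist x z⌉₊ ≤ 2 * ⌊dist x z⌋₊)
  calc dist (g x) (g y) ≤ ⌈dist x y⌉₊ * q := dist_map_le_ceil_dist_mul hmono x y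
    _ ≤ ⌈dist x z⌉₊ * q := by gcongr
    _ ≤ 2 * ⌊dist x z⌋₊ * q := by gcongr
    _ ≤ 2 * dist (g x) (g z) := by
      rw [mul_assoc]; gcongr; exact floor_dist_mul_le_dist_map hmono x z

lemma WeaklyQuasisymmetricOn.univ_of_Icc {a b : ℝ} (h : WeaklyQuasisymmetricOn g k (Icc a b))
    (hab : a + 3 ≤ b) (hmono : Monotone g) (hk : 2 ≤ k) : WeaklyQuasisymmetricOn g k univ := by
  intro x _ y _ z _ hxyz
  rcases le_total 1 (dist x z) with hxz | hxz
  · exact (dist_map_le_two_mul_of_one_le_dist hmono hxz hxyz).trans (by gcongr)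
  · have hmem {u : ℝ} (hu : dist x u ≤ 1) : u - ⌊x - (a + 1)⌋ ∈ Icc a b := by
      have hlt := Int.lt_floor_add_one (x - (a + 1))
      have hle := Int.floor_le (x - (a + 1))
      obtain ⟨hlo, hhi⟩ := abs_le.mp hu
      exact ⟨by linarith, by linarith⟩
    exact h.translate ⌊x - (a + 1)⌋ (hmem (by simp)) (hmem (hxyz.trans hxz)) (hmem hxz) hxyz

lemma WeaklyQuasisymmetricOn.univ_of_pointSymmetricAt
    (h : WeaklyQuasisymmetricOn g k (Icc 0 (1 / 2))) (hsymm : PointSymmetricAt g (1 / 2))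
    (hmono : Monotone g) (hk : 0 ≤ k) :
    WeaklyQuasisymmetricOn g (reflectionConst^[3] k) univ := by
  have hsymm₀ : PointSymmetricAt g 0 := by
    convert hsymm.add_half_int (-1) using 1; norm_num
  have hsymm₂ : PointSymmetricAt g (3 / 2) := by
    convert hsymm.add_half_int 2 using 1; norm_num
  have hk₁ := zero_le_one.trans (one_le_reflectionConst hk)
  have hk₂ := zero_le_one.trans (one_le_reflectionConst hk₁)
  have h₁ : WeaklyQuasisymmetricOn g (reflectionConst k) (Icc (-(1 / 2)) (1 / 2)) := by
    simpa using WeaklyQuasisymmetricOn.reflect (c := 0) (by simpa using h) hsymm₀ hmono hk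
  have h₂ : WeaklyQuasisymmetricOn g (reflectionConst (reflectionConst k))
      (Icc (1 / 2 - 1) (1 / 2 + 1)) :=
    .reflect (by convert h₁.translate 1 using 1; norm_num) hsymm hmono hk₁
  have h₃ : WeaklyQuasisymmetricOn g (reflectionConst^[3] k) (Icc (3 / 2 - 2) (3 / 2 + 2)) :=
    .reflect (by convert h₂.translate 2 using 1; norm_num) hsymm₂ hmono hk₂
  exact h₃.univ_of_Icc (by norm_num) hmono (two_le_reflectionConst_iterate hk)

end AddConstMap

/-- The function `f` on `(-∞, c]`, continued to the right of `c` by point reflection of its graph in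
`(c, f c)`. On either side one of the two summands is constant, so that continuity and monotonicity
need no gluing. -/
noncomputable def reflectAt (f : ℝ → ℝ) (c x : ℝ) : ℝ :=
  f (min x c) + (f c - f (2 * c - max x c))

section reflectAt

variable {f : ℝ → ℝ} {a c : ℝ}

lemma reflectAt_of_le {x : ℝ} (hx : x ≤ c) : reflectAt f c x = f x := by
  simp [reflectAt, hx, two_mul]

lemma pointSymmetricAt_reflectAt : PointSymmetricAt (reflectAt f c) c := by
  intro x
  have hmin : min (2 * c - x) c = 2 * c - max x c := by grind
  have hmax : 2 * c - max (2 * c - x) c = min x c := by grind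
  rw [reflectAt_of_le le_rfl, reflectAt, reflectAt, hmin, hmax]
  ring

lemma mapsTo_min_Icc (hac : a ≤ c) (b : ℝ) : MapsTo (fun x ↦ min x c) (Icc a b) (Icc a c) :=
  fun _ hx ↦ ⟨le_min hx.1 hac, min_le_right _ _⟩

lemma mapsTo_two_mul_sub_max_Icc (hac : a ≤ c) :
    MapsTo (fun x ↦ 2 * c - max x c) (Icc a (2 * c - a)) (Icc a c) :=
  fun x hx ↦ ⟨by linarith [max_le hx.2 (by linarith : c ≤ 2 * c - a)],
    by linarith [le_max_right x c]⟩

lemma continuousOn_reflectAt (hac : a ≤ c) (hf : ContinuousOn f (Icc a c)) :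
    ContinuousOn (reflectAt f c) (Icc a (2 * c - a)) :=
  (hf.comp (by fun_prop) (mapsTo_min_Icc hac _)).add
    (continuousOn_const.sub (hf.comp (by fun_prop) (mapsTo_two_mul_sub_max_Icc hac)))

lemma strictMonoOn_reflectAt (hac : a ≤ c) (hf : StrictMonoOn f (Icc a c)) :
    StrictMonoOn (reflectAt f c) (Icc a (2 * c - a)) := by
  intro x hx y hy hxy
  have hminx := mapsTo_min_Icc hac _ hx
  have hminy := mapsTo_min_Icc hac _ hy
  have hmaxx := mapsTo_two_mul_sub_max_Icc hac hx
  have hmaxy := mapsTo_two_mul_sub_max_Icc hac hy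
  unfold reflectAt
  rcases lt_or_ge x c with hxc | hcx
  · exact add_lt_add_of_lt_of_le (hf hminx hminy (by grind))
      (sub_le_sub_left (hf.monotoneOn hmaxy hmaxx (by grind)) _)
  · exact add_lt_add_of_le_of_lt (hf.monotoneOn hminx hminy (by grind))
      (sub_lt_sub_left (hf hmaxy hmaxx (by grind)) _)

end reflectAt

/-- The function `h` on `[0, 1)`, continued to the real line as a function `g` with
`g (x + 1) = g x + (h 1 - h 0)`. It also agrees with `h` at `1`. -/
noncomputable def quasiperiodize (h : ℝ → ℝ) : ℝ →+c[1, h 1 - h 0] ℝ :=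
  AddConstMap.mkFract _ fun x ↦ h x

section quasiperiodize

open AddConstMapClass

variable {h : ℝ → ℝ}

lemma quasiperiodize_apply (x : ℝ) :
    quasiperiodize h x = h (Int.fract x) + ⌊x⌋ * (h 1 - h 0) := by
  rw [← zsmul_eq_mul]; rfl

lemma eqOn_quasiperiodize : EqOn (quasiperiodize h) h (Icc 0 1) := by
  intro x hx
  rcases hx.2.eq_or_lt with rfl | hx1
  · simp [quasiperiodize_apply]
  · simp [quasiperiodize_apply, Int.fract_eq_self.mpr ⟨hx.1, hx1⟩,
      Int.floor_eq_zero_iff.mpr ⟨hx.1, hx1⟩]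

lemma strictMono_quasiperiodize (hh : StrictMonoOn h (Icc 0 1)) : StrictMono (quasiperiodize h) :=
  (strictMono_iff_Icc one_pos 0).mpr <| by
    rw [zero_add]; exact hh.congr eqOn_quasiperiodize.symm

lemma continuous_quasiperiodize (hh : ContinuousOn h (Icc 0 1)) :
    Continuous (quasiperiodize h) := by
  have hper : Continuous ((fun y ↦ h y - y * (h 1 - h 0)) ∘ Int.fract) :=
    ContinuousOn.comp_fract'' (hh.sub (by fun_prop)) (by simp)
  refine (hper.add (continuous_mul_const (h 1 - h 0))).congr fun x ↦ ?_
  rw [quasiperiodize_apply, Pi.add_apply, Function.comp_apply, Int.fract]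
  ring

lemma PointSymmetricAt.quasiperiodize (hh : PointSymmetricAt h (1 / 2)) :
    PointSymmetricAt (quasiperiodize h) (1 / 2) := by
  intro x
  have hmem : 1 - Int.fract x ∈ Icc (0 : ℝ) 1 :=
    ⟨sub_nonneg.mpr (Int.fract_lt_one x).le, sub_le_self _ (Int.fract_nonneg x)⟩
  have hx : 2 * (1 / 2) - x = 1 - Int.fract x - ⌊x⌋ := by
    rw [Int.fract]; ring
  have hfract : h (1 - Int.fract x) = 2 * h (1 / 2) - h (Int.fract x) := by
    rw [← hh]; norm_num
  rw [hx, map_sub_int', eqOn_quasiperiodize hmem, hfract, quasiperiodize_apply x,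
    eqOn_quasiperiodize (by norm_num), zsmul_eq_mul]
  ring

end quasiperiodize

lemma QuasisymmetricOn.exists_extension_of_Icc_zero_half {f : ℝ → ℝ} {k : ℝ}
    (hf : QuasisymmetricOn f k (Icc 0 (1 / 2))) :
    ∃ g : ℝ → ℝ, QuasisymmetricOn g (reflectionConst^[3] k) univ ∧ EqOn g f (Icc 0 (1 / 2)) := by
  have hk : 1 ≤ k := hf.one_le (by norm_num)
  set g := quasiperiodize (reflectAt f (1 / 2))
  have hIcc : Icc (0 : ℝ) (2 * (1 / 2) - 0) = Icc 0 1 := by norm_num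
  have hcont : Continuous g :=
    continuous_quasiperiodize (hIcc ▸ continuousOn_reflectAt (by norm_num) hf.1)
  have hmono : StrictMono g :=
    strictMono_quasiperiodize (hIcc ▸ strictMonoOn_reflectAt (by norm_num) hf.2.1)
  have heq : EqOn g f (Icc 0 (1 / 2)) := fun x hx ↦
    (eqOn_quasiperiodize ⟨hx.1, hx.2.trans (by norm_num)⟩).trans (reflectAt_of_le hx.2)
  have hweak : WeaklyQuasisymmetricOn g (reflectionConst^[3] k) univ :=
    ((hf.weaklyQuasisymmetricOn ordConnected_Icc hk).congr heq.symm).univ_of_pointSymmetricAt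
      pointSymmetricAt_reflectAt.quasiperiodize hmono.monotone (zero_le_one.trans hk)
  exact ⟨g, hweak.quasisymmetricOn hcont.continuousOn (hmono.strictMonoOn _)
    (two_pos.trans_le (two_le_reflectionConst_iterate (zero_le_one.trans hk))), heq⟩

/-- **Quasisymmetric extension (Lehto–Virtanen).** There is a function
`K : (0,∞) → (0,∞)` such that every function which is `k`-quasisymmetric on a
closed interval `[a,b]` extends to a function which is `k̃`-quasisymmetric on
the whole real axis for some `k̃ ≤ K k`. -/
theorem quasisymmetric_extension :
    ∃ K : ℝ → ℝ, (∀ k : ℝ, 0 < k → 0 < K k) ∧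
      ∀ k : ℝ, 0 < k → ∀ a b : ℝ, a < b → ∀ f : ℝ → ℝ,
        QuasisymmetricOn f k (Set.Icc a b) →
          ∃ ftilde : ℝ → ℝ, ∃ ktilde : ℝ, 0 < ktilde ∧ ktilde ≤ K k ∧
            QuasisymmetricOn ftilde ktilde Set.univ ∧
            ∀ x ∈ Set.Icc a b, ftilde x = f x := by
  have hKpos (k : ℝ) (hk : 0 < k) : 0 < reflectionConst^[3] k :=
    two_pos.trans_le (two_le_reflectionConst_iterate hk.le)
  refine ⟨reflectionConst^[3], hKpos, fun k hk a b hab f hf ↦ ?_⟩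
  have hL : 0 < 2 * (b - a) := by linarith
  have hscale : MapsTo (fun u ↦ 2 * (b - a) * u + a) (Icc 0 (1 / 2)) (Icc a b) :=
    fun u hu ↦ ⟨by nlinarith [hu.1], by nlinarith [hu.2]⟩
  have hunscale {x : ℝ} (hx : x ∈ Icc a b) :
      (2 * (b - a))⁻¹ * x + -((2 * (b - a))⁻¹ * a) ∈ Icc 0 (1 / 2) := by
    rw [← mul_neg, ← mul_add, ← sub_eq_add_neg, inv_mul_eq_div]
    exact ⟨div_nonneg (sub_nonneg.mpr hx.1) hL.le, by rw [div_le_iff₀ hL]; linarith [hx.2]⟩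
  have hcancel (x : ℝ) : 2 * (b - a) * ((2 * (b - a))⁻¹ * x + -((2 * (b - a))⁻¹ * a)) + a = x := by
    rw [mul_add, mul_neg, mul_inv_cancel_left₀ hL.ne', mul_inv_cancel_left₀ hL.ne',
      neg_add_cancel_right]
  obtain ⟨g, hg, hgf⟩ := (hf.comp_affine hL hscale).exists_extension_of_Icc_zero_half
  exact ⟨_, _, hKpos k hk, le_rfl, hg.comp_affine (inv_pos.mpr hL) (mapsTo_univ _ _),
    fun x hx ↦ (hgf (hunscale hx)).trans (congrArg f (hcancel x))⟩
end

section
/- (Cotangent formula for the Dirichlet energy of a linear map on a triangle.) Let T ⊆ ℝ² be a nondegenerate triangle with vertices v₁, v₂, v₃, and let α₁, α₂, α₃ denote the interior angles of T at v₁, v₂, v₃ respectively. Let φ : ℝ² → ℝ² be an affine map. Then the Dirichlet energy of φ over T satisfies ½ ∫_T ‖Dφ‖² = ¼ ( cot(α₁)·‖φ(v₂) − φ(v₃)‖² + cot(α₂)·‖φ(v₃) − φ(v₁)‖² + cot(α₃)·‖φ(v₁) − φ(v₂)‖² ), where Dφ is the (constant) derivative of φ and ‖Dφ‖² is the sum of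 squares of its matrix entries (the squared Frobenius norm), so that ∫_T ‖Dφ‖² = ‖Dφ‖² · Area(T). -/
open scoped BigOperators

/-!
Let `S` be twice the area of the triangle. At each vertex `S` is the product of the lengths of the
two adjacent sides and the sine of the angle between them, so `S * cot α` is the inner product of
the two edge vectors issuing from that vertex. If `u` and `w` are edge vectors issuing from one
vertex, then `S² = ‖u‖² ‖w‖² - ⟪u, w⟫²` is their Gram determinant, and `‖A‖² S²` is a combination of
the entries of the Gram matrix of `(A u, A w)` with coefficients from that of `(u, w)`. Rewriting it
in terms of the three edges gives the formula multiplied by `S`.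
-/

open EuclideanGeometry InnerProductGeometry MeasureTheory Module Real RealInnerProductSpace Set
open scoped Pointwise

namespace CotangentFormula

section Simplex

variable {R E ι : Type*} [Field R] [LinearOrder R] [IsStrictOrderedRing R] [AddCommGroup E]
  [Module R E] [Fintype ι]

lemma convexHull_insert_zero_range_basis (b : Basis ι R E) :
    convexHull R (insert 0 (range b)) = {x | (∀ i, 0 ≤ b.repr x i) ∧ ∑ i, b.repr x i ≤ 1} := by
  classical
  apply Subset.antisymm
  · refine convexHull_min ?_ ?_
    · rintro _ (rfl | ⟨i, rfl⟩)
      · simp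
      · simp [Finsupp.single_apply, apply_ite]
    · have hcoord (i : ι) : Convex R {x | 0 ≤ b.repr x i} :=
        convex_halfSpace_ge (b.coord i).isLinear 0
      have hsum : Convex R {x | ∑ i, b.repr x i ≤ 1} := by
        simpa using convex_halfSpace_le (∑ i, b.coord i).isLinear 1
      rw [ofPred_and, ofPred_forall]
      exact (convex_iInter hcoord).inter hsum
  · rintro x ⟨hx, hx_sum⟩
    let w (o : Option ι) : R := o.elim (1 - ∑ i, b.repr x i) (b.repr x)
    let z (o : Option ι) : E := o.elim 0 b
    have hw_nonneg : ∀ o ∈ Finset.univ, 0 ≤ w o := by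
      rintro (_ | i) -
      exacts [sub_nonneg.2 hx_sum, hx i]
    have hw_sum : ∑ o, w o = 1 := by simp [w, Fintype.sum_option]
    have hz_mem : ∀ o ∈ Finset.univ, z o ∈ convexHull R (insert 0 (range b)) := by
      rintro (_ | i) - <;> apply subset_convexHull <;> simp [z]
    have hwz : ∑ o, w o • z o = x := by simp [w, z, Fintype.sum_option, b.sum_repr]
    exact hwz ▸ (convex_convexHull R _).sum_mem hw_nonneg hw_sum hz_mem

end Simplex

section Parallelogram

variable {E : Type*} [AddCommGroup E] [Module ℝ E]

lemma basis_repr_add_sub (b : Basis (Fin 2) ℝ E) (x : E) (i : Fin 2) :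
    b.repr (b 0 + b 1 - x) i = 1 - b.repr x i := by
  fin_cases i <;> simp

lemma parallelepiped_basis_fin_two_eq_union (b : Basis (Fin 2) ℝ E) :
    parallelepiped b = convexHull ℝ (insert 0 (range b))
      ∪ (fun x => b 0 + b 1 - x) ⁻¹' convexHull ℝ (insert 0 (range b)) := by
  ext x
  simp only [convexHull_insert_zero_range_basis, parallelepiped_basis_eq, mem_union, mem_preimage,
    mem_ofPred_eq, mem_Icc, Fin.forall_fin_two, Fin.sum_univ_two, basis_repr_add_sub]
  grind

lemma convexHull_inter_preimage_add_sub_subset (b : Basis (Fin 2) ℝ E) :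
    convexHull ℝ (insert 0 (range b))
      ∩ (fun x => b 0 + b 1 - x) ⁻¹' convexHull ℝ (insert 0 (range b))
      ⊆ (b.coord 0 + b.coord 1) ⁻¹' {1} := by
  intro x
  simp only [convexHull_insert_zero_range_basis, mem_inter_iff, mem_preimage, mem_ofPred_eq,
    Fin.sum_univ_two, basis_repr_add_sub, LinearMap.add_apply, Basis.coord_apply, mem_singleton_iff]
  rintro ⟨⟨-, h_le⟩, -, h_ge⟩
  linarith

end Parallelogram

section Haar

variable {E : Type*} [NormedAddCommGroup E] [NormedSpace ℝ E] [FiniteDimensional ℝ E]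
  [MeasurableSpace E] [BorelSpace E] (μ : Measure E) [μ.IsAddHaarMeasure]

lemma addHaar_preimage_singleton_eq_zero {F : Type*} [AddCommGroup F] [Module ℝ F]
    {f : E →ₗ[ℝ] F} (hf : f ≠ 0) (c : F) : μ (f ⁻¹' {c}) = 0 := by
  let H : AffineSubspace ℝ E := (AffineSubspace.mk' c ⊥).comap f.toAffineMap
  have hH : (H : Set E) = f ⁻¹' {c} := by ext; simp [H, sub_eq_zero]
  rw [← hH]
  refine Measure.addHaar_affineSubspace μ H fun hH_top => hf <| LinearMap.ext fun x => ?_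
  have hconst (y : E) : f y = c := hH.subset (hH_top ▸ mem_univ y)
  rw [hconst, ← hconst 0, map_zero, LinearMap.zero_apply]

/-- A point reflection exchanges the two halves of the parallelogram, which overlap only in a
diagonal. -/
lemma addHaar_parallelepiped_basis_fin_two_eq_two_mul (b : Basis (Fin 2) ℝ E) :
    μ (parallelepiped b) = 2 * μ (convexHull ℝ (insert 0 (range b))) := by
  set T := convexHull ℝ (insert 0 (range b))
  let ρ : E → E := fun x => b 0 + b 1 - x
  have hρ : MeasurePreserving ρ μ μ := Measure.measurePreserving_sub_left μ _
  have hT_meas : MeasurableSet T :=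
    (((finite_range b).insert 0).isClosed_convexHull ℝ).measurableSet
  have h_sum_ne : b.coord 0 + b.coord 1 ≠ 0 := fun h => by
    simpa using LinearMap.congr_fun h (b 0)
  have h_disj : AEDisjoint μ T (ρ ⁻¹' T) :=
    measure_mono_null (convexHull_inter_preimage_add_sub_subset b)
      (addHaar_preimage_singleton_eq_zero μ h_sum_ne 1)
  calc μ (parallelepiped b)
      = μ (T ∪ ρ ⁻¹' T) := by rw [parallelepiped_basis_fin_two_eq_union]
    _ = μ T + μ (ρ ⁻¹' T) := measure_union₀ (hρ.measurable hT_meas).nullMeasurableSet h_disj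
    _ = 2 * μ T := by rw [hρ.measure_preimage hT_meas.nullMeasurableSet, two_mul]

lemma addHaar_parallelepiped_fin_two_eq_two_mul (hE : finrank ℝ E = 2) (v : Fin 2 → E) :
    μ (parallelepiped v) = 2 * μ (convexHull ℝ (insert 0 (range v))) := by
  let b : Basis (Fin 2) ℝ E := finBasisOfFinrankEq ℝ E hE
  have hv : b.constr ℝ v ∘ b = v := funext (b.constr_basis ℝ v)
  have hhull : convexHull ℝ (insert 0 (range v))
      = b.constr ℝ v '' convexHull ℝ (insert 0 (range b)) := by
    rw [LinearMap.image_convexHull, image_insert_eq, map_zero, ← range_comp, hv]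
  have hpar : parallelepiped v = b.constr ℝ v '' parallelepiped b := by
    rw [image_parallelepiped, hv]
  rw [hhull, hpar, Measure.addHaar_image_linearMap, Measure.addHaar_image_linearMap,
    addHaar_parallelepiped_basis_fin_two_eq_two_mul, mul_left_comm]

lemma addHaar_parallelepiped_sub_sub_eq_two_mul (hE : finrank ℝ E = 2) (p q r : E) :
    μ (parallelepiped ![q - p, r - p]) = 2 * μ (convexHull ℝ {p, q, r}) := by
  have htranslate : ({p, q, r} : Set E) = p +ᵥ insert 0 (range ![q - p, r - p]) := by
    simp [vadd_set_insert, pair_comm]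
  rw [addHaar_parallelepiped_fin_two_eq_two_mul μ hE, htranslate, convexHull_vadd, measure_vadd]

end Haar

section Gram

variable {E : Type*} [NormedAddCommGroup E] [InnerProductSpace ℝ E]

lemma det_gram_eq_sq_det {ι : Type*} [Fintype ι] [DecidableEq ι]
    (b : OrthonormalBasis ι ℝ E) (v : ι → E) :
    (Matrix.gram ℝ v).det = b.toBasis.det v ^ 2 := by
  rw [Matrix.gram_eq_conjTranspose_mul b, Matrix.det_mul, Matrix.det_conjTranspose, star_trivial,
    ← sq]
  rfl

lemma volume_parallelepiped_eq_sqrt_det_gram {ι : Type*} [Fintype ι] [DecidableEq ι]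
    [FiniteDimensional ℝ E] [MeasurableSpace E] [BorelSpace E]
    (b : OrthonormalBasis ι ℝ E) (v : ι → E) :
    volume (parallelepiped v) = ENNReal.ofReal √(Matrix.gram ℝ v).det := by
  rw [det_gram_eq_sq_det b, sqrt_sq_eq_abs, ← Measure.addHaar_parallelepiped, b.addHaar_eq_volume]

lemma sqrt_det_gram_pair (u w : E) :
    √(Matrix.gram ℝ ![u, w]).det = sin (angle u w) * (‖u‖ * ‖w‖) := by
  simp [sin_angle_mul_norm_mul_norm, Matrix.det_fin_two, real_inner_comm]

end Gram

section Triangle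

variable {E : Type*} [NormedAddCommGroup E] [InnerProductSpace ℝ E] [FiniteDimensional ℝ E]
  [MeasurableSpace E] [BorelSpace E] (hE : finrank ℝ E = 2)
include hE

lemma two_mul_area_triangle_eq_sin_mul (p q r : E) :
    2 * volume.real (convexHull ℝ {p, q, r}) = sin (∠ q p r) * (‖q - p‖ * ‖r - p‖) := by
  have b : OrthonormalBasis (Fin 2) ℝ E := (stdOrthonormalBasis ℝ E).reindex (finCongr hE)
  have h := congrArg ENNReal.toReal (addHaar_parallelepiped_sub_sub_eq_two_mul volume hE p q r)
  rw [volume_parallelepiped_eq_sqrt_det_gram b, ENNReal.toReal_mul,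
    ENNReal.toReal_ofReal (sqrt_nonneg _), sqrt_det_gram_pair] at h
  exact h.symm

lemma two_mul_area_triangle_ne_zero {p q r : E} (h : AffineIndependent ℝ ![p, q, r]) :
    2 * volume.real (convexHull ℝ {p, q, r}) ≠ 0 := by
  have h_sin : sin (∠ q p r) ≠ 0 :=
    sin_ne_zero_of_not_collinear (affineIndependent_iff_not_collinear_set.1 h.comm_left)
  have h_qp : q ≠ p := h.injective.ne (show (1 : Fin 3) ≠ 0 by decide)
  have h_rp : r ≠ p := h.injective.ne (show (2 : Fin 3) ≠ 0 by decide)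
  rw [two_mul_area_triangle_eq_sin_mul hE]
  exact mul_ne_zero h_sin <| mul_ne_zero (norm_ne_zero_iff.2 (sub_ne_zero.2 h_qp))
    (norm_ne_zero_iff.2 (sub_ne_zero.2 h_rp))

lemma two_mul_area_triangle_mul_cot {p q r : E} (h : AffineIndependent ℝ ![p, q, r]) :
    2 * volume.real (convexHull ℝ {p, q, r}) * cot (∠ q p r) = ⟪q - p, r - p⟫ := by
  have h_sin : sin (∠ q p r) ≠ 0 :=
    sin_ne_zero_of_not_collinear (affineIndependent_iff_not_collinear_set.1 h.comm_left)
  calc 2 * volume.real (convexHull ℝ {p, q, r}) * cot (∠ q p r)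
      = cos (∠ q p r) * (‖q - p‖ * ‖r - p‖) := by
        rw [two_mul_area_triangle_eq_sin_mul hE, cot_eq_cos_div_sin]
        field_simp
    _ = ⟪q - p, r - p⟫ := cos_angle_mul_norm_mul_norm _ _

lemma sq_two_mul_area_triangle (p q r : E) :
    (2 * volume.real (convexHull ℝ {p, q, r})) ^ 2
      = ‖q - p‖ ^ 2 * ‖r - p‖ ^ 2 - ⟪q - p, r - p⟫ ^ 2 := by
  have hcos : cos (∠ q p r) * (‖q - p‖ * ‖r - p‖) = ⟪q - p, r - p⟫ :=
    cos_angle_mul_norm_mul_norm _ _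
  rw [two_mul_area_triangle_eq_sin_mul hE, ← hcos, mul_pow, sin_sq]
  ring

end Triangle

section Energy

variable {E F : Type*} [NormedAddCommGroup E] [InnerProductSpace ℝ E]
  [NormedAddCommGroup F] [InnerProductSpace ℝ F]

lemma inner_smul_add_smul (a b c d : ℝ) (e f : E) :
    ⟪a • e + b • f, c • e + d • f⟫
      = a * c * ⟪e, e⟫ + (a * d + b * c) * ⟪e, f⟫ + b * d * ⟪f, f⟫ := by
  simp only [inner_add_left, inner_add_right, real_inner_smul_left, real_inner_smul_right,
    real_inner_comm e f]
  ring

lemma sum_norm_sq_mul_gram_det (b : OrthonormalBasis (Fin 2) ℝ E) (A : E →ₗ[ℝ] F) (u w : E) :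
    (∑ i, ‖A (b i)‖ ^ 2) * (‖u‖ ^ 2 * ‖w‖ ^ 2 - ⟪u, w⟫ ^ 2)
      = ‖w‖ ^ 2 * ‖A u‖ ^ 2 - 2 * ⟪u, w⟫ * ⟪A u, A w⟫ + ‖u‖ ^ 2 * ‖A w‖ ^ 2 := by
  have hb : ⟪b 0, b 0⟫ = 1 ∧ ⟪b 1, b 1⟫ = 1 ∧ ⟪b 0, b 1⟫ = 0 := by simp [b.inner_eq_ite]
  rw [← b.sum_repr u, ← b.sum_repr w]
  simp only [← real_inner_self_eq_norm_sq, Fin.sum_univ_two, map_add, map_smul,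
    inner_smul_add_smul, hb]
  ring

lemma sum_norm_sq_mul_gram_det_triangle (b : OrthonormalBasis (Fin 2) ℝ E) (A : E →ₗ[ℝ] F)
    (p q r : E) :
    (∑ i, ‖A (b i)‖ ^ 2) * (‖q - p‖ ^ 2 * ‖r - p‖ ^ 2 - ⟪q - p, r - p⟫ ^ 2)
      = ⟪q - p, r - p⟫ * ‖A (q - r)‖ ^ 2 + ⟪r - q, p - q⟫ * ‖A (r - p)‖ ^ 2
        + ⟪p - r, q - r⟫ * ‖A (p - q)‖ ^ 2 := by
  obtain ⟨u, rfl⟩ : ∃ u, q = p + u := ⟨q - p, by abel⟩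
  obtain ⟨w, rfl⟩ : ∃ w, r = p + w := ⟨r - p, by abel⟩
  simp only [add_sub_cancel_left, add_sub_add_left_eq_sub, sub_add_cancel_left,
    sum_norm_sq_mul_gram_det, map_sub, map_neg, norm_neg, norm_sub_sq_real, inner_sub_left,
    inner_sub_right, inner_neg_left, inner_neg_right, real_inner_self_eq_norm_sq,
    real_inner_comm u w]
  ring

end Energy

end CotangentFormula

open CotangentFormula

theorem dirichlet_energy_cotangent_formula_general {E F : Type*}
    [NormedAddCommGroup E] [InnerProductSpace ℝ E] [FiniteDimensional ℝ E]
    [MeasurableSpace E] [BorelSpace E] [NormedAddCommGroup F] [InnerProductSpace ℝ F]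
    (b : OrthonormalBasis (Fin 2) ℝ E) {v₁ v₂ v₃ : E} (hind : AffineIndependent ℝ ![v₁, v₂, v₃])
    (φ : E →ᵃ[ℝ] F) :
    1 / 2 * (∑ i, ‖φ.linear (b i)‖ ^ 2) * volume.real (convexHull ℝ {v₁, v₂, v₃})
      = 1 / 4 * (cot (∠ v₂ v₁ v₃) * ‖φ v₂ - φ v₃‖ ^ 2 + cot (∠ v₃ v₂ v₁) * ‖φ v₃ - φ v₁‖ ^ 2
        + cot (∠ v₁ v₃ v₂) * ‖φ v₁ - φ v₂‖ ^ 2) := by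
  have hE : finrank ℝ E = 2 := finrank_eq_card_basis b.toBasis
  have h₂₃₁ : ({v₂, v₃, v₁} : Set E) = {v₁, v₂, v₃} := by grind
  have h₃₁₂ : ({v₃, v₁, v₂} : Set E) = {v₁, v₂, v₃} := by grind
  have hS := two_mul_area_triangle_ne_zero hE hind
  have hS_sq := sq_two_mul_area_triangle hE v₁ v₂ v₃
  have hcot₁ := two_mul_area_triangle_mul_cot hE hind
  have hcot₂ := two_mul_area_triangle_mul_cot hE hind.comm_left.comm_right
  have hcot₃ := two_mul_area_triangle_mul_cot hE hind.comm_right.comm_left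
  have h_energy := sum_norm_sq_mul_gram_det_triangle b φ.linear v₁ v₂ v₃
  have hφ (x y : E) : φ x - φ y = φ.linear (x - y) := (φ.linearMap_vsub x y).symm
  rw [h₂₃₁] at hcot₂
  rw [h₃₁₂] at hcot₃
  rw [← hS_sq, ← hcot₁, ← hcot₂, ← hcot₃, ← hφ, ← hφ, ← hφ] at h_energy
  refine mul_left_cancel₀ hS ?_
  linear_combination h_energy / 4

/-- **Cotangent formula for the Dirichlet energy of an affine map on a
triangle.** Let `T` be the nondegenerate triangle with vertices `v₁, v₂, v₃` in
`ℝ²`, with interior angles `α₁, α₂, α₃`, and let `φ x = A x + c` be an affine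
map with (constant) derivative `A`. Then
`½ ∫_T ‖Dφ‖² = ½ ‖A‖_F² · Area(T)` equals
`¼ (cot α₁ ‖φ v₂ − φ v₃‖² + cot α₂ ‖φ v₃ − φ v₁‖² + cot α₃ ‖φ v₁ − φ v₂‖²)`,
where `‖A‖_F²` is the squared Frobenius norm of `A`. -/
theorem dirichlet_energy_cotangent_formula
    (v₁ v₂ v₃ : EuclideanSpace ℝ (Fin 2))
    (hind : AffineIndependent ℝ ![v₁, v₂, v₃])
    (A : EuclideanSpace ℝ (Fin 2) →L[ℝ] EuclideanSpace ℝ (Fin 2))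
    (c : EuclideanSpace ℝ (Fin 2))
    (φ : EuclideanSpace ℝ (Fin 2) → EuclideanSpace ℝ (Fin 2))
    (hφ : ∀ x, φ x = A x + c)
    (T : Set (EuclideanSpace ℝ (Fin 2)))
    (hT : T = convexHull ℝ {v₁, v₂, v₃})
    (frobSq : ℝ)
    (hfrob : frobSq = ∑ j : Fin 2, ∑ i : Fin 2, (A (EuclideanSpace.single j 1) i) ^ 2)
    (α₁ α₂ α₃ : ℝ)
    (hα₁ : α₁ = InnerProductGeometry.angle (v₂ - v₁) (v₃ - v₁))
    (hα₂ : α₂ = InnerProductGeometry.angle (v₃ - v₂) (v₁ - v₂))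
    (hα₃ : α₃ = InnerProductGeometry.angle (v₁ - v₃) (v₂ - v₃)) :
    (1 / 2 : ℝ) * frobSq * (MeasureTheory.volume T).toReal
      = (1 / 4 : ℝ) * (Real.cot α₁ * ‖φ v₂ - φ v₃‖ ^ 2
        + Real.cot α₂ * ‖φ v₃ - φ v₁‖ ^ 2
        + Real.cot α₃ * ‖φ v₁ - φ v₂‖ ^ 2) := by
  subst hT hfrob hα₁ hα₂ hα₃
  simpa [hφ, measureReal_def, EuclideanSpace.real_norm_sq_eq, EuclideanGeometry.angle] using
    dirichlet_energy_cotangent_formula_general (EuclideanSpace.basisFun (Fin 2) ℝ) hind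
      (A.toLinearMap.toAffineMap + AffineMap.const ℝ (EuclideanSpace ℝ (Fin 2)) c)
end
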